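/- arXiv:2602.08173 — 3 statements merged into one kernel-verified Lean document; each statement's English description precedes it below -/
import Mathlib

section
/- Let n, p ≥ 1 be natural numbers, let X be a fixed real n×n matrix, and let Z be a random n×p matrix whose entries are i.i.d. standard Gaussian. Set T = ⟨X, Z·Zᵀ − p·I_n⟩, where ⟨A,B⟩ = tr(Aᵀ·B) and I_n is the n×n identity matrix. Then E[T] = 0 and E[T²] = 2p·‖(X+Xᵀ)/2‖_F² ≤ 2p·‖X‖_F². -/
/-!
Write `T = ∑ X i j * (Z i k * Z j k - δ i j)`, summed over all `(i, j, k)`. Everything reduces to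
the second and fourth mixed moments of the entries of `Z`. A mixed moment of independent entries is
a product of one-dimensional moments (`integral_monomial`), and the moments of the standard
Gaussian up to order four are the derivatives at `0` of its moment generating function
`exp (t ^ 2 / 2)`. This gives Wick's formula for four entries (`integral_four`), whence
`E[(Z i k * Z j k - δ i j) * (Z i' k' * Z j' k' - δ i' j')] = δ k k' * (δ i i' * δ j j' + δ i j' * δ j i')`
(`integral_wickTerm_mul`). Summing against `X i j * X i' j'` gives
`E[T ^ 2] = p * ∑ (X i j ^ 2 + X i j * X j i)`, which is `2 * p` times the squared Frobenius norm
of the symmetric part of `X`. The last inequality is `((a + b) / 2) ^ 2 ≤ (a ^ 2 + b ^ 2) / 2`.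
-/

open MeasureTheory ProbabilityTheory

/-- The law of an `n × p` matrix with i.i.d. standard Gaussian entries
(as the product Gaussian measure on `Fin n → Fin p → ℝ`). -/
noncomputable def gaussMat (n p : ℕ) : Measure (Fin n → Fin p → ℝ) :=
  Measure.pi fun _ : Fin n => Measure.pi fun _ : Fin p => gaussianReal 0 1

/-- Squared Frobenius norm `‖A‖_F² = Σ_{i,j} A(i,j)²`. -/
def frobSq {n m : ℕ} (A : Fin n → Fin m → ℝ) : ℝ := ∑ i, ∑ j, A i j ^ 2

/-- `T = ⟨X, Z·Zᵀ − p·I_n⟩` where `⟨A,B⟩ = tr(Aᵀ B) = Σ_{i,j} A(i,j)·B(i,j)`. -/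
def Tstat {n p : ℕ} (X : Fin n → Fin n → ℝ) (Z : Fin n → Fin p → ℝ) : ℝ :=
  ∑ i, ∑ j, X i j * ((∑ k, Z i k * Z j k) - if i = j then (p : ℝ) else 0)

/-! ### Moments of the standard Gaussian -/

lemma zero_mem_interior_expSet :
    (0 : ℝ) ∈ interior (integrableExpSet id (gaussianReal 0 1)) := by
  simp

lemma integrable_pow_gauss (m : ℕ) : Integrable (fun x : ℝ => x ^ m) (gaussianReal 0 1) :=
  integrable_pow_of_mem_interior_integrableExpSet zero_mem_interior_expSet m

lemma integral_pow_gauss_eq_iteratedDeriv (m : ℕ) :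
    ∫ x, x ^ m ∂(gaussianReal 0 1) = iteratedDeriv m (fun t : ℝ => Real.exp (t ^ 2 / 2)) 0 := by
  have h := iteratedDeriv_mgf_zero zero_mem_interior_expSet m
  rw [mgf_id_gaussianReal] at h
  simp only [NNReal.coe_one, zero_mul, zero_add, one_mul] at h
  rw [h]
  simp

/-- The product rule for a function of the form `q t * exp (t ^ 2 / 2)`. -/
lemma deriv_mul_exp_sq {q : ℝ → ℝ} {q' : ℝ → ℝ} (hq : ∀ t, HasDerivAt q (q' t) t) :
    deriv (fun t : ℝ => q t * Real.exp (t ^ 2 / 2)) =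
      fun t => (q' t + t * q t) * Real.exp (t ^ 2 / 2) := by
  funext t
  have h2 : HasDerivAt (fun t : ℝ => t ^ 2 / 2) t t := by
    refine ((hasDerivAt_pow 2 t).div_const 2).congr_deriv ?_
    norm_num
  have := (hq t).mul h2.exp
  refine (this.congr_deriv ?_).deriv
  ring

lemma iteratedDeriv_exp_sq :
    iteratedDeriv 1 (fun t : ℝ => Real.exp (t ^ 2 / 2)) = (fun t => t * Real.exp (t ^ 2 / 2)) ∧
    iteratedDeriv 2 (fun t : ℝ => Real.exp (t ^ 2 / 2)) =
      (fun t => (1 + t ^ 2) * Real.exp (t ^ 2 / 2)) ∧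
    iteratedDeriv 3 (fun t : ℝ => Real.exp (t ^ 2 / 2)) =
      (fun t => (3 * t + t ^ 3) * Real.exp (t ^ 2 / 2)) ∧
    iteratedDeriv 4 (fun t : ℝ => Real.exp (t ^ 2 / 2)) =
      (fun t => (3 + 6 * t ^ 2 + t ^ 4) * Real.exp (t ^ 2 / 2)) := by
  have h1 : iteratedDeriv 1 (fun t : ℝ => Real.exp (t ^ 2 / 2)) =
      (fun t => t * Real.exp (t ^ 2 / 2)) := by
    rw [iteratedDeriv_one]
    have := deriv_mul_exp_sq (fun t => hasDerivAt_const t (1 : ℝ))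
    simpa using this
  have h2 : iteratedDeriv 2 (fun t : ℝ => Real.exp (t ^ 2 / 2)) =
      (fun t => (1 + t ^ 2) * Real.exp (t ^ 2 / 2)) := by
    rw [iteratedDeriv_succ, h1, deriv_mul_exp_sq (fun t => hasDerivAt_id' t)]
    funext t; ring
  have h3 : iteratedDeriv 3 (fun t : ℝ => Real.exp (t ^ 2 / 2)) =
      (fun t => (3 * t + t ^ 3) * Real.exp (t ^ 2 / 2)) := by
    rw [iteratedDeriv_succ, h2,
      deriv_mul_exp_sq (fun t => (hasDerivAt_pow 2 t).const_add 1)]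
    funext t; push_cast; ring
  refine ⟨h1, h2, h3, ?_⟩
  have hq (t : ℝ) : HasDerivAt (fun t : ℝ => 3 * t + t ^ 3) (3 * 1 + (3 : ℕ) * t ^ (3 - 1)) t :=
    ((hasDerivAt_id' t).const_mul 3).add (hasDerivAt_pow 3 t)
  rw [iteratedDeriv_succ, h3, deriv_mul_exp_sq hq]
  funext t; push_cast; ring

lemma integral_pow_gauss_zero : ∫ x : ℝ, x ^ 0 ∂(gaussianReal 0 1) = 1 := by simp

lemma integral_pow_gauss_one : ∫ x : ℝ, x ^ 1 ∂(gaussianReal 0 1) = 0 := by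
  rw [integral_pow_gauss_eq_iteratedDeriv, iteratedDeriv_exp_sq.1]; simp

lemma integral_pow_gauss_two : ∫ x : ℝ, x ^ 2 ∂(gaussianReal 0 1) = 1 := by
  rw [integral_pow_gauss_eq_iteratedDeriv, iteratedDeriv_exp_sq.2.1]; simp

lemma integral_pow_gauss_four : ∫ x : ℝ, x ^ 4 ∂(gaussianReal 0 1) = 3 := by
  rw [integral_pow_gauss_eq_iteratedDeriv, iteratedDeriv_exp_sq.2.2.2]; simp

/-! ### Mixed moments of the matrix entries -/

instance isProbabilityMeasure_gaussMat (n p : ℕ) : IsProbabilityMeasure (gaussMat n p) := by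
  unfold gaussMat; infer_instance

lemma integrable_monomial {n p : ℕ} (α : Fin n × Fin p → ℕ) :
    Integrable (fun Z : Fin n → Fin p → ℝ => ∏ q : Fin n × Fin p, Z q.1 q.2 ^ α q)
      (gaussMat n p) := by
  simp only [Fintype.prod_prod_type]
  exact Integrable.fintype_prod (f := fun i (z : Fin p → ℝ) => ∏ k, z k ^ α (i, k)) fun i =>
    Integrable.fintype_prod (f := fun k (x : ℝ) => x ^ α (i, k)) fun k => integrable_pow_gauss _

lemma integral_monomial {n p : ℕ} (α : Fin n × Fin p → ℕ) :
    ∫ Z : Fin n → Fin p → ℝ, ∏ q : Fin n × Fin p, Z q.1 q.2 ^ α q ∂(gaussMat n p) =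
      ∏ q : Fin n × Fin p, ∫ x, x ^ α q ∂(gaussianReal 0 1) := by
  simp only [Fintype.prod_prod_type]
  unfold gaussMat
  rw [integral_fintype_prod_eq_prod (fun i (z : Fin p → ℝ) => ∏ k, z k ^ α (i, k))]
  refine Finset.prod_congr rfl fun i _ => ?_
  rw [integral_fintype_prod_eq_prod (fun k (x : ℝ) => x ^ α (i, k))]

/-- The exponent of the entry `q` in the monomial `Z a * Z b * Z c * Z d`. -/
def mult {n p : ℕ} (a b c d q : Fin n × Fin p) : ℕ :=
  (if q = a then 1 else 0) + (if q = b then 1 else 0) + (if q = c then 1 else 0) +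
    (if q = d then 1 else 0)

lemma four_eq_monomial {n p : ℕ} (a b c d : Fin n × Fin p) (Z : Fin n → Fin p → ℝ) :
    Z a.1 a.2 * Z b.1 b.2 * Z c.1 c.2 * Z d.1 d.2 =
      ∏ q : Fin n × Fin p, Z q.1 q.2 ^ mult a b c d q := by
  simp only [mult, pow_add, Finset.prod_mul_distrib, pow_ite, pow_one, pow_zero,
    Finset.prod_ite_eq', Finset.mem_univ, if_true]

lemma integrable_four {n p : ℕ} (a b c d : Fin n × Fin p) :
    Integrable (fun Z : Fin n → Fin p → ℝ => Z a.1 a.2 * Z b.1 b.2 * Z c.1 c.2 * Z d.1 d.2)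
      (gaussMat n p) := by
  simp only [four_eq_monomial]
  exact integrable_monomial _

lemma integral_four_eq_zero {n p : ℕ} {a b c d : Fin n × Fin p} (q : Fin n × Fin p)
    (hq : mult a b c d q = 1) :
    ∫ Z : Fin n → Fin p → ℝ, Z a.1 a.2 * Z b.1 b.2 * Z c.1 c.2 * Z d.1 d.2 ∂(gaussMat n p) = 0 := by
  simp only [four_eq_monomial]
  rw [integral_monomial]
  refine Finset.prod_eq_zero (Finset.mem_univ q) ?_
  rw [hq, integral_pow_gauss_one]

lemma integral_four_eq_one {n p : ℕ} {a b c d : Fin n × Fin p}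
    (h : ∀ q, mult a b c d q = 0 ∨ mult a b c d q = 2) :
    ∫ Z : Fin n → Fin p → ℝ, Z a.1 a.2 * Z b.1 b.2 * Z c.1 c.2 * Z d.1 d.2 ∂(gaussMat n p) = 1 := by
  simp only [four_eq_monomial]
  rw [integral_monomial]
  refine Finset.prod_eq_one fun q _ => ?_
  rcases h q with h | h
  · rw [h, integral_pow_gauss_zero]
  · rw [h, integral_pow_gauss_two]

lemma integral_four_same {n p : ℕ} (a : Fin n × Fin p) :
    ∫ Z : Fin n → Fin p → ℝ, Z a.1 a.2 * Z a.1 a.2 * Z a.1 a.2 * Z a.1 a.2 ∂(gaussMat n p) = 3 := by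
  simp only [four_eq_monomial]
  rw [integral_monomial, Finset.prod_eq_single a]
  · simpa [mult] using integral_pow_gauss_four
  · intro q _ hq
    simp [mult, hq]
  · simp

/-- Wick's formula for the fourth moments. If some entry occurs exactly once the moment vanishes;
otherwise the entries pair up into two distinct pairs or all coincide. -/
lemma integral_four {n p : ℕ} (a b c d : Fin n × Fin p) :
    ∫ Z : Fin n → Fin p → ℝ, Z a.1 a.2 * Z b.1 b.2 * Z c.1 c.2 * Z d.1 d.2 ∂(gaussMat n p) =
      (if a = b ∧ c = d then 1 else 0) + (if a = c ∧ b = d then 1 else 0) +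
        (if a = d ∧ b = c then 1 else 0) := by
  by_cases hab : a = b
  · subst hab
    by_cases hcd : c = d
    · subst hcd
      by_cases hac : a = c
      · subst hac
        rw [integral_four_same]; norm_num
      · rw [integral_four_eq_one]
        · simp [hac]
        · intro q; unfold mult; grind
    · by_cases hac : a = c
      · rw [integral_four_eq_zero d (by unfold mult; grind)]; grind
      · rw [integral_four_eq_zero c (by unfold mult; grind)]; grind
  · by_cases hac : a = c
    · subst hac
      by_cases hbd : b = d
      · subst hbd
        rw [integral_four_eq_one (by intro q; unfold mult; grind)]; grind
      · rw [integral_four_eq_zero b (by unfold mult; grind)]; grind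
    · by_cases had : a = d
      · subst had
        by_cases hbc : b = c
        · subst hbc
          rw [integral_four_eq_one (by intro q; unfold mult; grind)]; grind
        · rw [integral_four_eq_zero b (by unfold mult; grind)]; grind
      · rw [integral_four_eq_zero a (by unfold mult; grind)]; grind

lemma two_eq_monomial {n p : ℕ} (a b : Fin n × Fin p) (Z : Fin n → Fin p → ℝ) :
    Z a.1 a.2 * Z b.1 b.2 = ∏ q : Fin n × Fin p, Z q.1 q.2 ^
      ((if q = a then 1 else 0) + (if q = b then 1 else 0)) := by
  simp only [pow_add, Finset.prod_mul_distrib, pow_ite, pow_one, pow_zero,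
    Finset.prod_ite_eq', Finset.mem_univ, if_true]

lemma integrable_two {n p : ℕ} (a b : Fin n × Fin p) :
    Integrable (fun Z : Fin n → Fin p → ℝ => Z a.1 a.2 * Z b.1 b.2) (gaussMat n p) := by
  simp only [two_eq_monomial]
  exact integrable_monomial _

lemma integral_two {n p : ℕ} (a b : Fin n × Fin p) :
    ∫ Z : Fin n → Fin p → ℝ, Z a.1 a.2 * Z b.1 b.2 ∂(gaussMat n p) = if a = b then 1 else 0 := by
  simp only [two_eq_monomial]
  rw [integral_monomial]
  by_cases hab : a = b
  · subst hab
    rw [if_pos rfl]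
    refine Finset.prod_eq_one fun q _ => ?_
    by_cases hq : q = a
    · simpa [hq] using integral_pow_gauss_two
    · simp [hq]
  · rw [if_neg hab]
    refine Finset.prod_eq_zero (Finset.mem_univ a) ?_
    simp [hab]

/-! ### The quadratic form -/

/-- The centred product `Z i k * Z j k - δ i j`, indexed by `t = (i, j, k)`. -/
def wickTerm {n p : ℕ} (t : Fin n × Fin n × Fin p) (Z : Fin n → Fin p → ℝ) : ℝ :=
  Z t.1 t.2.2 * Z t.2.1 t.2.2 - if t.1 = t.2.1 then 1 else 0

lemma Tstat_eq_sum_wickTerm {n p : ℕ} (X : Fin n → Fin n → ℝ) (Z : Fin n → Fin p → ℝ) :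
    Tstat X Z = ∑ t : Fin n × Fin n × Fin p, X t.1 t.2.1 * wickTerm t Z := by
  simp only [Tstat, wickTerm, Fintype.sum_prod_type, ← Finset.mul_sum, Finset.sum_sub_distrib]
  refine Finset.sum_congr rfl fun i _ => Finset.sum_congr rfl fun j _ => ?_
  by_cases h : i = j <;> simp [h]

lemma integrable_wickTerm {n p : ℕ} (t : Fin n × Fin n × Fin p) :
    Integrable (wickTerm t) (gaussMat n p) :=
  (integrable_two (t.1, t.2.2) (t.2.1, t.2.2)).sub (integrable_const _)

lemma integral_wickTerm {n p : ℕ} (t : Fin n × Fin n × Fin p) :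
    ∫ Z, wickTerm t Z ∂(gaussMat n p) = 0 := by
  unfold wickTerm
  rw [integral_sub (integrable_two (t.1, t.2.2) (t.2.1, t.2.2)) (integrable_const _),
    integral_two (t.1, t.2.2) (t.2.1, t.2.2)]
  simp only [Prod.mk.injEq, and_true, integral_const, probReal_univ, one_smul, sub_self]

lemma wickTerm_mul {n p : ℕ} (t s : Fin n × Fin n × Fin p) :
    (fun Z : Fin n → Fin p → ℝ => wickTerm t Z * wickTerm s Z) = fun Z =>
      Z t.1 t.2.2 * Z t.2.1 t.2.2 * Z s.1 s.2.2 * Z s.2.1 s.2.2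
        - (if s.1 = s.2.1 then 1 else 0) * (Z t.1 t.2.2 * Z t.2.1 t.2.2)
        - (if t.1 = t.2.1 then 1 else 0) * wickTerm s Z := by
  funext Z
  unfold wickTerm
  ring

lemma integrable_wickTerm_mul {n p : ℕ} (t s : Fin n × Fin n × Fin p) :
    Integrable (fun Z : Fin n → Fin p → ℝ => wickTerm t Z * wickTerm s Z) (gaussMat n p) := by
  rw [wickTerm_mul]
  exact ((integrable_four (t.1, t.2.2) (t.2.1, t.2.2) (s.1, s.2.2) (s.2.1, s.2.2)).sub
    ((integrable_two (t.1, t.2.2) (t.2.1, t.2.2)).const_mul _)).sub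
    ((integrable_wickTerm s).const_mul _)

lemma integral_wickTerm_mul {n p : ℕ} (t s : Fin n × Fin n × Fin p) :
    ∫ Z, wickTerm t Z * wickTerm s Z ∂(gaussMat n p) =
      (if s = t then 1 else 0) + (if s = (t.2.1, t.1, t.2.2) then 1 else 0) := by
  have h4 := integrable_four (t.1, t.2.2) (t.2.1, t.2.2) (s.1, s.2.2) (s.2.1, s.2.2)
  have h2 := (integrable_two (t.1, t.2.2) (t.2.1, t.2.2)).const_mul
    (if s.1 = s.2.1 then (1 : ℝ) else 0)
  have h1 := (integrable_wickTerm s).const_mul (if t.1 = t.2.1 then (1 : ℝ) else 0)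
  have h42 := h4.sub h2
  simp only [Pi.sub_def] at h42
  rw [wickTerm_mul, integral_sub h42 h1, integral_sub h4 h2, integral_const_mul,
    integral_const_mul, integral_wickTerm,
    integral_four (t.1, t.2.2) (t.2.1, t.2.2) (s.1, s.2.2) (s.2.1, s.2.2),
    integral_two (t.1, t.2.2) (t.2.1, t.2.2)]
  obtain ⟨i, j, k⟩ := t
  obtain ⟨i', j', k'⟩ := s
  simp only [Prod.mk.injEq]
  grind

lemma two_mul_frobSq_symm {n : ℕ} (X : Fin n → Fin n → ℝ) :
    2 * frobSq (fun i j => (X i j + X j i) / 2) = ∑ i, ∑ j, (X i j ^ 2 + X i j * X j i) := by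
  have hsymm : ∑ i, ∑ j, X j i ^ 2 = ∑ i, ∑ j, X i j ^ 2 := Finset.sum_comm
  have h : ∀ i j, 2 * ((X i j + X j i) / 2) ^ 2 =
      (1 / 2) * X i j ^ 2 + (1 / 2) * X j i ^ 2 + X i j * X j i := fun i j => by ring
  simp only [frobSq, Finset.mul_sum, h, Finset.sum_add_distrib]
  simp only [← Finset.mul_sum, hsymm]
  ring

lemma frobSq_symm_le {n : ℕ} (X : Fin n → Fin n → ℝ) :
    frobSq (fun i j => (X i j + X j i) / 2) ≤ frobSq X := by
  have hsymm : ∑ i, ∑ j, X j i ^ 2 = ∑ i, ∑ j, X i j ^ 2 := Finset.sum_comm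
  calc frobSq (fun i j => (X i j + X j i) / 2)
      ≤ ∑ i, ∑ j, ((1 / 2) * X i j ^ 2 + (1 / 2) * X j i ^ 2) :=
        Finset.sum_le_sum fun i _ => Finset.sum_le_sum fun j _ => by
          nlinarith [sq_nonneg (X i j - X j i)]
    _ = frobSq X := by
        simp only [Finset.sum_add_distrib, ← Finset.mul_sum, hsymm, frobSq]
        ring

/-- for a fixed `n × n` matrix `X` and a random `n × p` matrix `Z` with
i.i.d. standard Gaussian entries, `T = ⟨X, ZZᵀ − pI⟩` satisfies `E[T] = 0` and
`E[T²] = 2p·‖(X+Xᵀ)/2‖_F² ≤ 2p·‖X‖_F²`. -/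
theorem gaussian_quadratic_form_mean_and_variance
    (n p : ℕ) (hn : 1 ≤ n) (hp : 1 ≤ p) (X : Fin n → Fin n → ℝ) :
    (∫ Z, Tstat X Z ∂(gaussMat n p)) = 0 ∧
    (∫ Z, Tstat X Z ^ 2 ∂(gaussMat n p)) =
      2 * p * frobSq (fun i j => (X i j + X j i) / 2) ∧
    2 * p * frobSq (fun i j => (X i j + X j i) / 2) ≤ 2 * p * frobSq X := by
  refine ⟨?_, ?_, ?_⟩
  · simp only [Tstat_eq_sum_wickTerm]
    rw [integral_finsetSum _ fun t _ => (integrable_wickTerm t).const_mul _]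
    simp [integral_const_mul, integral_wickTerm]
  · have hsq : ∀ Z : Fin n → Fin p → ℝ, Tstat X Z ^ 2 =
        ∑ t : Fin n × Fin n × Fin p, ∑ s : Fin n × Fin n × Fin p,
          (X t.1 t.2.1 * X s.1 s.2.1) * (wickTerm t Z * wickTerm s Z) := fun Z => by
      rw [Tstat_eq_sum_wickTerm, sq, Finset.sum_mul_sum]
      refine Finset.sum_congr rfl fun t _ => Finset.sum_congr rfl fun s _ => ?_
      ring
    simp only [hsq]
    rw [integral_finsetSum _ fun t _ => integrable_finsetSum _ fun s _ =>
      (integrable_wickTerm_mul t s).const_mul _]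
    have hin : ∀ t : Fin n × Fin n × Fin p,
        ∫ Z, ∑ s : Fin n × Fin n × Fin p,
          (X t.1 t.2.1 * X s.1 s.2.1) * (wickTerm t Z * wickTerm s Z) ∂(gaussMat n p) =
        X t.1 t.2.1 ^ 2 + X t.1 t.2.1 * X t.2.1 t.1 := fun t => by
      rw [integral_finsetSum _ fun s _ => (integrable_wickTerm_mul t s).const_mul _]
      simp only [integral_const_mul, integral_wickTerm_mul, mul_add, Finset.sum_add_distrib,
        mul_ite, mul_one, mul_zero, Finset.sum_ite_eq', Finset.mem_univ, if_true]
      ring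
    simp only [hin]
    rw [mul_comm (2 : ℝ) p, mul_assoc, two_mul_frobSq_symm]
    simp only [Fintype.sum_prod_type, Finset.sum_const, Finset.card_univ, Fintype.card_fin,
      nsmul_eq_mul, Finset.mul_sum]
  · exact mul_le_mul_of_nonneg_left (frobSq_symm_le X) (by positivity)
end

section
/- Let (Ω, ℱ, P) be a probability space, let n > 0 be a real number, let ρ ∈ (0,1], and let C be a real number with C ≥ 100/ρ². Let A and B be real random variables with A integrable and B² integrable, such that almost surely B ≥ 0 and A ≤ n·B. Assume E[A] ≥ ρ²·n² and E[B²] ≤ C·n². Then P(A ≥ ρ²·n²/2 and B ≤ C²·n) ≥ (ρ²/2 − 1/C)/C². -/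
/-!
The bound follows by integrating the almost sure inequality
`A ≤ ρ² n² / 2 + C² n² · 1_S + B² / C²`, where `S` is the event in question:
on `S` one has `A ≤ n B ≤ C² n²`; off `S` either `A < ρ² n² / 2`, or `B > C² n`, and then
`A ≤ n B ≤ B² / C²`. Taking expectations, `ρ² n² ≤ ρ² n² / 2 + C² n² P(S) + n² / C`.
-/

open MeasureTheory

/-- the generic probabilistic deduction underlying the weak-recovery
guarantee. If `A` is integrable, `B²` is integrable, almost surely `0 ≤ B` and `A ≤ n·B`,
`E[A] ≥ ρ²n²` and `E[B²] ≤ Cn²` with `C ≥ 100/ρ²`, then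
`P(A ≥ ρ²n²/2 and B ≤ C²n) ≥ (ρ²/2 − 1/C)/C²`. -/
theorem weak_recovery_probability_bound
    {Ω : Type*} [MeasurableSpace Ω] (P : Measure Ω) [IsProbabilityMeasure P]
    (n : ℝ) (hn : 0 < n) (ρ : ℝ) (hρ : ρ ∈ Set.Ioc (0 : ℝ) 1)
    (C : ℝ) (hC : 100 / ρ ^ 2 ≤ C)
    (A B : Ω → ℝ) (hAmeas : Measurable A) (hBmeas : Measurable B)
    (hAint : Integrable A P) (hB2int : Integrable (fun ω => B ω ^ 2) P)
    (hab : ∀ᵐ ω ∂P, 0 ≤ B ω ∧ A ω ≤ n * B ω)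
    (hEA : ρ ^ 2 * n ^ 2 ≤ ∫ ω, A ω ∂P)
    (hEB : (∫ ω, B ω ^ 2 ∂P) ≤ C * n ^ 2) :
    ENNReal.ofReal ((ρ ^ 2 / 2 - 1 / C) / C ^ 2) ≤
      P {ω | ρ ^ 2 * n ^ 2 / 2 ≤ A ω ∧ B ω ≤ C ^ 2 * n} := by
  obtain ⟨hρ0, -⟩ := hρ
  have hC0 : 0 < C := lt_of_lt_of_le (by positivity) hC
  set S : Set Ω := {ω | ρ ^ 2 * n ^ 2 / 2 ≤ A ω ∧ B ω ≤ C ^ 2 * n} with hS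
  have hSm : MeasurableSet S :=
    (measurableSet_le measurable_const hAmeas).inter (measurableSet_le hBmeas measurable_const)
  have hind : Integrable (S.indicator fun _ => C ^ 2 * n ^ 2) P :=
    (integrable_const _).indicator hSm
  have hB2 : Integrable (fun ω => B ω ^ 2 / C ^ 2) P := hB2int.div_const _
  have hsum : Integrable
      (fun ω => ρ ^ 2 * n ^ 2 / 2 + S.indicator (fun _ => C ^ 2 * n ^ 2) ω) P :=
    (integrable_const _).add hind
  have hpt : ∀ᵐ ω ∂P, A ω ≤ ρ ^ 2 * n ^ 2 / 2 + S.indicator (fun _ => C ^ 2 * n ^ 2) ω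
      + B ω ^ 2 / C ^ 2 := by
    filter_upwards [hab] with ω ⟨hB0, hAB⟩
    have hq : 0 ≤ B ω ^ 2 / C ^ 2 := by positivity
    have hm : 0 ≤ ρ ^ 2 * n ^ 2 / 2 := by positivity
    by_cases hω : ω ∈ S
    · rw [Set.indicator_of_mem hω]
      have := mul_le_mul_of_nonneg_left hω.2 hn.le
      linarith
    · rw [Set.indicator_of_notMem hω]
      by_cases hA : ρ ^ 2 * n ^ 2 / 2 ≤ A ω
      · have hBlarge : C ^ 2 * n < B ω := not_le.mp fun h => hω ⟨hA, h⟩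
        -- On the tail `B > C² n` the linear bound `n B` is dominated by `B² / C²`.
        have : n * B ω ≤ B ω ^ 2 / C ^ 2 := by
          rw [le_div_iff₀ (by positivity)]
          nlinarith
        linarith
      · linarith
  have hint : ∫ ω, A ω ∂P ≤ ρ ^ 2 * n ^ 2 / 2 + P.real S * (C ^ 2 * n ^ 2)
      + (∫ ω, B ω ^ 2 ∂P) / C ^ 2 := by
    have h := integral_mono_ae hAint (hsum.add hB2) hpt
    have e : ∫ ω, (ρ ^ 2 * n ^ 2 / 2 + S.indicator (fun _ => C ^ 2 * n ^ 2) ω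
        + B ω ^ 2 / C ^ 2) ∂P = ρ ^ 2 * n ^ 2 / 2 + P.real S * (C ^ 2 * n ^ 2)
        + (∫ ω, B ω ^ 2 ∂P) / C ^ 2 := by
      rw [integral_add hsum hB2,
        integral_add (integrable_const _) hind, integral_indicator_const _ hSm,
        integral_div (C ^ 2) fun ω => B ω ^ 2]
      simp
    exact h.trans_eq e
  have hdiv : (∫ ω, B ω ^ 2 ∂P) / C ^ 2 ≤ 1 / C * n ^ 2 := by
    rw [div_le_iff₀ (by positivity)]
    refine hEB.trans_eq ?_
    field_simp
  rw [← ENNReal.ofReal_toReal (measure_ne_top P S)]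
  refine ENNReal.ofReal_le_ofReal ?_
  change _ ≤ P.real S
  rw [div_le_iff₀ (by positivity)]
  have hn2 : 0 < n ^ 2 := by positivity
  refine le_of_mul_le_mul_right ?_ hn2
  linarith
end

section
/- With the word weights W(ω) as in the context, let P̃ be the (L+1)×(L+1) real symmetric matrix indexed by {0,…,L} with diagonal entries P̃_{kk} = c_k, with P̃_{0ℓ} = P̃_{ℓ0} = ρ²·√(c_0·c_ℓ) for 1 ≤ ℓ ≤ L, and with P̃_{ℓℓ′} = ρ⁴·√(c_ℓ·c_ℓ′) for distinct 1 ≤ ℓ, ℓ′ ≤ L, and let σ₊ denote the largest eigenvalue of P̃. Then there exists a constant D ≥ 1, depending only on L, ρ, c_0, …, c_L (but not on m), such that for every natural number m ≥ 1: D^{−1}·σ₊^m ≤ Σ_{ω ∈ {0,…,L}^m} W(ω) ≤ D·σ₊^m. -/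
/-!
Put `s ℓ = √(c ℓ)` and write `P` for the symmetric matrix `symTransferMat L ρ c`. Prepending a
letter `a` to a word starting with `b` multiplies its weight by `s a * P a b / s b`
(`wordWeight_cons`), so that the sum of the weights of the words of length `n + 1` is the quadratic
form `s ⬝ᵥ P ^ n *ᵥ s`.

All entries of `P` are positive, so `P` has an eigenvector `v` with positive entries
(`exists_pos_eigenvector`): if `x` maximizes the Rayleigh quotient of `P`, then so does `|x|`, hence
`|x|` is a nonnegative eigenvector, and positivity of `P` makes it positive. Pairing `v` with the
absolute values of any other eigenvector shows that its eigenvalue is the largest one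
(`isGreatest_eigenvalue`), that is, `σ₊`. Finally `s` lies between two positive multiples of `v`,
and this comparison is propagated by the nonnegative matrix `P`: `P ^ n *ᵥ s` lies between the same
multiples of `σ₊ ^ n • v`. The matrix powers are not formed explicitly; the recursion on the first
letter of the word (`startSum_succ`) is used directly.
-/

open Finset

/-- The number of consecutive positions `i` in the word `ω` such that exactly one of
`ω_i, ω_{i+1}` equals `0`. -/
def dif0Count {L m : ℕ} (ω : Fin m → Fin (L + 1)) : ℕ :=
  ((List.ofFn ω).zip (List.ofFn ω).tail).countP
    (fun q => decide ((q.1 = 0 ∧ q.2 ≠ 0) ∨ (q.1 ≠ 0 ∧ q.2 = 0)))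

/-- The number of consecutive positions `i` in the word `ω` such that `ω_i ≠ ω_{i+1}` and
both `ω_i, ω_{i+1}` are nonzero. -/
def difCount {L m : ℕ} (ω : Fin m → Fin (L + 1)) : ℕ :=
  ((List.ofFn ω).zip (List.ofFn ω).tail).countP
    (fun q => decide (q.1 ≠ q.2 ∧ q.1 ≠ 0 ∧ q.2 ≠ 0))

/-- The weight `W(ω) = ρ^{2·dif_0(ω) + 4·dif(ω)} · ∏_{ℓ=0}^L c_ℓ^{E_ℓ(ω)}`, where
`E_ℓ(ω)` counts the occurrences of the letter `ℓ` in `ω`. -/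
noncomputable def wordWeight (L : ℕ) (ρ : ℝ) (c : Fin (L + 1) → ℝ) {m : ℕ}
    (ω : Fin m → Fin (L + 1)) : ℝ :=
  ρ ^ (2 * dif0Count ω + 4 * difCount ω) *
    ∏ ℓ : Fin (L + 1), c ℓ ^ (Finset.univ.filter fun i => ω i = ℓ).card

/-- The symmetric matrix `P̃`: diagonal entries `c_k`, entries `ρ²√(c_0 c_ℓ)` in row/column
`0`, and entries `ρ⁴√(c_ℓ c_ℓ')` for distinct nonzero `ℓ, ℓ'`. -/
noncomputable def symTransferMat (L : ℕ) (ρ : ℝ) (c : Fin (L + 1) → ℝ) :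
    Matrix (Fin (L + 1)) (Fin (L + 1)) ℝ :=
  Matrix.of fun k j =>
    if k = j then c k
    else if k = 0 ∨ j = 0 then ρ ^ 2 * Real.sqrt (c k * c j)
    else ρ ^ 4 * Real.sqrt (c k * c j)

/-- The largest (real) eigenvalue of `P̃`. -/
noncomputable def sigmaPlus (L : ℕ) (ρ : ℝ) (c : Fin (L + 1) → ℝ) : ℝ :=
  sSup {μ : ℝ |
    (symTransferMat L ρ c - μ • (1 : Matrix (Fin (L + 1)) (Fin (L + 1)) ℝ)).det = 0}

/-! ### Positive symmetric matrices -/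

open Matrix in
/-- Perron's theorem for a symmetric matrix with positive entries, proved by replacing a maximizer
of the Rayleigh quotient by its entrywise absolute value. -/
theorem exists_pos_eigenvector {n : Type*} [Fintype n] [DecidableEq n] [Nonempty n]
    (P : Matrix n n ℝ) (hsymm : P.IsHermitian) (hpos : ∀ i j, 0 < P i j) :
    ∃ (r : ℝ) (v : n → ℝ), 0 < r ∧ (∀ i, 0 < v i) ∧ P *ᵥ v = r • v := by
  let T := toEuclideanCLM (n := n) (𝕜 := ℝ) P
  have hT : IsSelfAdjoint T := by
    have h : IsSelfAdjoint P := hsymm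
    exact h.map (toEuclideanCLM (n := n) (𝕜 := ℝ))
  have hq : ∀ x, T.reApplyInnerSelf x = ∑ i, ∑ j, x i * (P i j * x j) := by
    intro x
    rw [ContinuousLinearMap.reApplyInnerSelf_apply, real_inner_comm]
    simp only [T, RCLike.re_to_real, inner_toEuclideanCLM, dotProduct, mulVec, Finset.mul_sum]
  have hcpt : IsCompact (Metric.sphere (0 : EuclideanSpace ℝ n) 1) := isCompact_sphere _ _
  have hne : (Metric.sphere (0 : EuclideanSpace ℝ n) 1).Nonempty :=
    NormedSpace.sphere_nonempty.2 zero_le_one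
  obtain ⟨x, hx, hmax⟩ := hcpt.exists_isMaxOn hne T.reApplyInnerSelf_continuous.continuousOn
  let y : EuclideanSpace ℝ n := WithLp.toLp 2 fun i => |x i|
  have hyi : ∀ i, y i = |x i| := fun i => rfl
  have hynorm : ‖y‖ = 1 := by
    have hx1 : ‖x‖ = 1 := by simpa using hx
    rw [← hx1, EuclideanSpace.norm_eq, EuclideanSpace.norm_eq]
    simp [hyi]
  have hy0 : y ≠ 0 := by
    intro h
    simp [h] at hynorm
  have hxy : T.reApplyInnerSelf x ≤ T.reApplyInnerSelf y := by
    rw [hq, hq]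
    refine Finset.sum_le_sum fun i _ => Finset.sum_le_sum fun j _ => ?_
    calc x i * (P i j * x j) = P i j * (x i * x j) := by ring
      _ ≤ P i j * |x i * x j| := by gcongr; exacts [(hpos i j).le, le_abs_self _]
      _ = y i * (P i j * y j) := by rw [hyi, hyi, abs_mul]; ring
  have hymax : IsMaxOn T.reApplyInnerSelf (Metric.sphere (0 : EuclideanSpace ℝ n) ‖y‖) y := by
    rw [hynorm]
    exact fun z hz => (hmax hz).trans hxy
  have heig := hT.eq_smul_self_of_isLocalExtrOn_real (Or.inr hymax.localize)
  set r := T.rayleighQuotient y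
  have hPy : ∀ i, ∑ j, P i j * y j = r * y i := by
    intro i
    have := congrArg (fun z : EuclideanSpace ℝ n => z i) heig
    simpa [T, ofLp_toEuclideanCLM, mulVec, dotProduct] using this
  obtain ⟨k, hk⟩ : ∃ k, 0 < y k := by
    by_contra! h
    exact hy0 (by
      ext i
      exact le_antisymm (h i) (abs_nonneg _))
  have hsum : ∀ i, 0 < r * y i := by
    intro i
    rw [← hPy i]
    exact Finset.sum_pos' (fun j _ => mul_nonneg (hpos i j).le (abs_nonneg _))
      ⟨k, Finset.mem_univ k, mul_pos (hpos i k) hk⟩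
  have hr : 0 < r := pos_of_mul_pos_left (hsum k) hk.le
  refine ⟨r, y, hr, fun i => pos_of_mul_pos_right (hsum i) hr.le, ?_⟩
  ext i
  simpa [mulVec, dotProduct] using hPy i

open Matrix in
/-- The eigenvalue of a positive eigenvector dominates every real eigenvalue `μ`: for an eigenvector
`u` of `μ`, pair the inequality `μ |u| ≤ P |u|` with the positive eigenvector. -/
theorem isGreatest_eigenvalue {n : Type*} [Fintype n] [DecidableEq n] [Nonempty n]
    (P : Matrix n n ℝ) (hsymm : P.IsHermitian) (hpos : ∀ i j, 0 < P i j)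
    {r : ℝ} {v : n → ℝ} (hv : ∀ i, 0 < v i) (hPv : P *ᵥ v = r • v) :
    IsGreatest {μ : ℝ | (P - μ • (1 : Matrix n n ℝ)).det = 0} r := by
  have key : ∀ (μ : ℝ) (u : n → ℝ), (P - μ • (1 : Matrix n n ℝ)) *ᵥ u = 0 ↔ P *ᵥ u = μ • u := by
    intro μ u
    rw [sub_mulVec, smul_mulVec, one_mulVec, sub_eq_zero]
  constructor
  · refine exists_mulVec_eq_zero_iff.1 ⟨v, ?_, (key r v).2 hPv⟩
    intro h
    obtain ⟨i⟩ := ‹Nonempty n›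
    exact (hv i).ne' (congrFun h i)
  · intro μ hμ
    obtain ⟨u, hu0, hu⟩ := exists_mulVec_eq_zero_iff.2 hμ
    rw [key] at hu
    have hle : ∀ i, μ * |u i| ≤ ∑ j, P i j * |u j| := by
      intro i
      have hi : ∑ j, P i j * u j = μ * u i := by
        simpa [mulVec, dotProduct] using congrFun hu i
      calc μ * |u i| ≤ |μ| * |u i| := by gcongr; exact le_abs_self μ
        _ = |∑ j, P i j * u j| := by rw [hi, abs_mul]
        _ ≤ ∑ j, |P i j * u j| := Finset.abs_sum_le_sum_abs _ _
        _ = ∑ j, P i j * |u j| := by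
          simp only [abs_mul, abs_of_pos (hpos i _)]
    have hPv' : ∀ j, ∑ i, P j i * v i = r * v j := by
      intro j
      simpa [mulVec, dotProduct] using congrFun hPv j
    have hS : 0 < ∑ i, v i * |u i| := by
      obtain ⟨k, hk⟩ := Function.ne_iff.1 hu0
      exact Finset.sum_pos' (fun j _ => mul_nonneg (hv j).le (abs_nonneg _))
        ⟨k, Finset.mem_univ k, mul_pos (hv k) (abs_pos.2 hk)⟩
    refine le_of_mul_le_mul_right ?_ hS
    calc μ * ∑ i, v i * |u i| = ∑ i, v i * (μ * |u i|) := by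
          rw [Finset.mul_sum]
          exact Finset.sum_congr rfl fun i _ => by ring
      _ ≤ ∑ i, v i * ∑ j, P i j * |u j| :=
          Finset.sum_le_sum fun i _ => mul_le_mul_of_nonneg_left (hle i) (hv i).le
      _ = ∑ j, (∑ i, P j i * v i) * |u j| := by
          simp only [Finset.mul_sum, Finset.sum_mul]
          rw [Finset.sum_comm]
          refine Finset.sum_congr rfl fun j _ => Finset.sum_congr rfl fun i _ => ?_
          have : P j i = P i j := by simpa using hsymm.apply i j
          rw [this]
          ring
      _ = r * ∑ i, v i * |u i| := by
          rw [Finset.mul_sum]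
          exact Finset.sum_congr rfl fun j _ => by rw [hPv' j]; ring

theorem exists_pos_mul_le {n : Type*} [Finite n] [Nonempty n] {u v : n → ℝ}
    (hu : ∀ i, 0 < u i) (hv : ∀ i, 0 < v i) : ∃ k : ℝ, 0 < k ∧ ∀ i, k * v i ≤ u i := by
  obtain ⟨i₀, hi₀⟩ := Finite.exists_min fun i => u i / v i
  exact ⟨u i₀ / v i₀, div_pos (hu _) (hv _), fun i => (le_div_iff₀ (hv i)).1 (hi₀ i)⟩

theorem symTransferMat_isHermitian (L : ℕ) (ρ : ℝ) (c : Fin (L + 1) → ℝ) :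
    (symTransferMat L ρ c).IsHermitian := by
  ext i j
  simp only [symTransferMat, Matrix.conjTranspose_apply, Matrix.of_apply, star_trivial,
    mul_comm (c j), or_comm (a := j = 0), eq_comm (a := j) (b := i)]
  split_ifs with h
  · rw [h]
  all_goals rfl

theorem symTransferMat_pos {L : ℕ} {ρ : ℝ} (hρ : 0 < ρ) {c : Fin (L + 1) → ℝ}
    (hc : ∀ ℓ, 0 < c ℓ) (i j : Fin (L + 1)) : 0 < symTransferMat L ρ c i j := by
  have h := Real.sqrt_pos.2 (mul_pos (hc i) (hc j))
  simp only [symTransferMat, Matrix.of_apply]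
  split_ifs
  · exact hc i
  all_goals positivity

/-! ### The transfer recursion for the word weights -/

theorem prod_pow_card_letter {L : ℕ} (c : Fin (L + 1) → ℝ) (n : ℕ) (w : Fin n → Fin (L + 1)) :
    ∏ ℓ : Fin (L + 1), c ℓ ^ (Finset.univ.filter fun i => w i = ℓ).card = ∏ i, c (w i) := by
  simp only [← Finset.prod_const]
  rw [← Finset.prod_fiberwise (s := Finset.univ) (g := w) (f := fun i => c (w i))]
  refine Finset.prod_congr rfl fun ℓ _ => Finset.prod_congr rfl fun i hi => ?_
  rw [(Finset.mem_filter.1 hi).2]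

/-- Prepending `a` multiplies the weight by `ρ ^ e * c a`, where `e` is the cost of the new pair
`(a, b)`; as `P a b = ρ ^ e * √(c a * c b)`, this factor is `√(c a) * P a b / √(c b)`. -/
theorem wordWeight_cons {L : ℕ} {ρ : ℝ} {c : Fin (L + 1) → ℝ} (hc : ∀ ℓ, 0 < c ℓ) {m : ℕ}
    (a b : Fin (L + 1)) (ω : Fin m → Fin (L + 1)) :
    wordWeight L ρ c (Fin.cons a (Fin.cons b ω : Fin (m + 1) → Fin (L + 1)) :
        Fin (m + 2) → Fin (L + 1)) =
      √(c a) * (symTransferMat L ρ c a b *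
        (wordWeight L ρ c (Fin.cons b ω : Fin (m + 1) → Fin (L + 1)) / √(c b))) := by
  have hsa : √(c a) * √(c a) = c a := Real.mul_self_sqrt (hc a).le
  have hsb : √(c b) ≠ 0 := (Real.sqrt_pos.2 (hc b)).ne'
  have hab : √(c a * c b) = √(c a) * √(c b) := Real.sqrt_mul (hc a).le _
  simp only [wordWeight, prod_pow_card_letter]
  rw [Fin.prod_univ_succ]
  simp only [Fin.cons_zero, Fin.cons_succ]
  generalize (∏ i, c ((Fin.cons b ω : Fin (m + 1) → Fin (L + 1)) i)) = Q
  -- the extra pair of consecutive letters is `(a, b)`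
  have h0 : dif0Count (Fin.cons a (Fin.cons b ω : Fin (m + 1) → Fin (L + 1)) :
        Fin (m + 2) → Fin (L + 1)) = dif0Count (Fin.cons b ω : Fin (m + 1) → Fin (L + 1)) +
        if (a = 0 ∧ b ≠ 0) ∨ (a ≠ 0 ∧ b = 0) then 1 else 0 := by
    simp [dif0Count, List.ofFn_succ, List.countP_cons]
  have h1 : difCount (Fin.cons a (Fin.cons b ω : Fin (m + 1) → Fin (L + 1)) :
        Fin (m + 2) → Fin (L + 1)) = difCount (Fin.cons b ω : Fin (m + 1) → Fin (L + 1)) +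
        if a ≠ b ∧ a ≠ 0 ∧ b ≠ 0 then 1 else 0 := by
    simp [difCount, List.ofFn_succ, List.countP_cons]
  rw [h0, h1]
  generalize dif0Count (Fin.cons b ω : Fin (m + 1) → Fin (L + 1)) = p
  generalize difCount (Fin.cons b ω : Fin (m + 1) → Fin (L + 1)) = q
  have hexp : symTransferMat L ρ c a b * √(c a) =
      ρ ^ (2 * (if (a = 0 ∧ b ≠ 0) ∨ (a ≠ 0 ∧ b = 0) then 1 else 0) +
        4 * (if a ≠ b ∧ a ≠ 0 ∧ b ≠ 0 then 1 else 0)) * c a * √(c b) := by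
    simp only [symTransferMat, Matrix.of_apply]
    by_cases e : a = b
    · subst e
      by_cases ha : a = 0 <;> simp [ha]
    · by_cases ha : a = 0
      · have hb : b ≠ 0 := fun h => e (ha.trans h.symm)
        rw [if_neg e, if_pos (Or.inl ha), if_pos (Or.inl ⟨ha, hb⟩), if_neg (fun h => h.2.1 ha), hab]
        linear_combination ρ ^ 2 * √(c b) * hsa
      · by_cases hb : b = 0
        · rw [if_neg e, if_pos (Or.inr hb), if_pos (Or.inr ⟨ha, hb⟩), if_neg (fun h => h.2.2 hb),
            hab]
          linear_combination ρ ^ 2 * √(c b) * hsa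
        · rw [if_neg e, if_neg (by tauto), if_neg (by tauto), if_pos ⟨e, ha, hb⟩, hab]
          linear_combination ρ ^ 4 * √(c b) * hsa
  rw [mul_add, mul_add, add_add_add_comm, pow_add]
  field_simp
  linear_combination (-ρ ^ (2 * p + 4 * q) * Q) * hexp

/-- The total weight of the words of length `n + 1` with first letter `b`, divided by `√(c b)`. It
equals the entry at `b` of `P ^ n *ᵥ s`, where `P = symTransferMat L ρ c` and `s ℓ = √(c ℓ)`. -/
noncomputable def startSum (L : ℕ) (ρ : ℝ) (c : Fin (L + 1) → ℝ) (n : ℕ) (b : Fin (L + 1)) : ℝ :=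
  (∑ ω : Fin n → Fin (L + 1), wordWeight L ρ c (Fin.cons b ω : Fin (n + 1) → Fin (L + 1))) / √(c b)

theorem startSum_zero {L : ℕ} {ρ : ℝ} {c : Fin (L + 1) → ℝ} (b : Fin (L + 1)) :
    startSum L ρ c 0 b = √(c b) := by
  simp only [startSum, wordWeight, prod_pow_card_letter]
  simp [dif0Count, difCount, Real.div_sqrt]

theorem sum_fin_succ_fun {α : Type*} [Fintype α] (n : ℕ) (f : (Fin (n + 1) → α) → ℝ) :
    ∑ ω, f ω = ∑ a, ∑ ω : Fin n → α, f (Fin.cons a ω) := by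
  rw [← (Fin.consEquiv fun _ => α).sum_comp, Fintype.sum_prod_type]
  rfl

theorem startSum_succ {L : ℕ} {ρ : ℝ} {c : Fin (L + 1) → ℝ} (hc : ∀ ℓ, 0 < c ℓ) (n : ℕ)
    (a : Fin (L + 1)) :
    startSum L ρ c (n + 1) a = ∑ b, symTransferMat L ρ c a b * startSum L ρ c n b := by
  have hsa : √(c a) ≠ 0 := (Real.sqrt_pos.2 (hc a)).ne'
  rw [startSum, sum_fin_succ_fun, div_eq_iff hsa, mul_comm, Finset.mul_sum]
  refine Finset.sum_congr rfl fun b _ => ?_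
  simp only [wordWeight_cons hc, startSum, ← Finset.mul_sum, ← Finset.sum_div]

theorem sum_wordWeight_succ {L : ℕ} {ρ : ℝ} {c : Fin (L + 1) → ℝ} (hc : ∀ ℓ, 0 < c ℓ) (n : ℕ) :
    ∑ ω : Fin (n + 1) → Fin (L + 1), wordWeight L ρ c ω =
      ∑ b, √(c b) * startSum L ρ c n b := by
  rw [sum_fin_succ_fun]
  refine Finset.sum_congr rfl fun b _ => ?_
  rw [startSum, mul_div_cancel₀ _ (Real.sqrt_pos.2 (hc b)).ne']

/-- there is a constant `D ≥ 1`, independent of `m`, with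
`D⁻¹ σ₊^m ≤ Σ_{ω ∈ {0,…,L}^m} W(ω) ≤ D σ₊^m` for all `m ≥ 1`, where `σ₊` is the largest
eigenvalue of the symmetric matrix `P̃`. -/
theorem wordSum_growth_rate
    (L : ℕ) (hL : 1 ≤ L) (ρ : ℝ) (hρ : ρ ∈ Set.Ioc (0 : ℝ) 1)
    (c : Fin (L + 1) → ℝ) (hc : ∀ ℓ, 0 < c ℓ) :
    ∃ D : ℝ, 1 ≤ D ∧ ∀ m : ℕ, 1 ≤ m →
      (D⁻¹ * sigmaPlus L ρ c ^ m ≤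
          ∑ ω : Fin m → Fin (L + 1), wordWeight L ρ c ω) ∧
      (∑ ω : Fin m → Fin (L + 1), wordWeight L ρ c ω ≤ D * sigmaPlus L ρ c ^ m) := by
  have hP := symTransferMat_pos hρ.1 hc
  have hsymm := symTransferMat_isHermitian L ρ c
  obtain ⟨r, v, hr, hv, hPv⟩ := exists_pos_eigenvector _ hsymm hP
  have hσ : sigmaPlus L ρ c = r := (isGreatest_eigenvalue _ hsymm hP hv hPv).csSup_eq
  have hPv' : ∀ a, ∑ b, symTransferMat L ρ c a b * v b = r * v a := by
    intro a
    simpa [Matrix.mulVec, dotProduct] using congrFun hPv a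
  have hs : ∀ b, 0 < √(c b) := fun b => Real.sqrt_pos.2 (hc b)
  obtain ⟨k, hk, hkv⟩ := exists_pos_mul_le hs hv
  obtain ⟨K, hK, hKv⟩ := exists_pos_mul_le hv hs
  have hlow : ∀ n a, k * r ^ n * v a ≤ startSum L ρ c n a := by
    intro n
    induction n with
    | zero => intro a; simpa [startSum_zero] using hkv a
    | succ n ih =>
      intro a
      calc k * r ^ (n + 1) * v a = ∑ b, symTransferMat L ρ c a b * (k * r ^ n * v b) := by
            rw [pow_succ, show k * (r ^ n * r) * v a = k * r ^ n * (r * v a) by ring, ← hPv' a,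
              Finset.mul_sum]
            exact Finset.sum_congr rfl fun b _ => by ring
        _ ≤ ∑ b, symTransferMat L ρ c a b * startSum L ρ c n b :=
            Finset.sum_le_sum fun b _ => mul_le_mul_of_nonneg_left (ih b) (hP a b).le
        _ = startSum L ρ c (n + 1) a := (startSum_succ hc n a).symm
  have hupp : ∀ n a, startSum L ρ c n a ≤ K⁻¹ * r ^ n * v a := by
    intro n
    induction n with
    | zero =>
      intro a
      simpa [startSum_zero] using (le_inv_mul_iff₀ hK).2 (hKv a)
    | succ n ih =>
      intro a
      calc startSum L ρ c (n + 1) a = ∑ b, symTransferMat L ρ c a b * startSum L ρ c n b :=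
            startSum_succ hc n a
        _ ≤ ∑ b, symTransferMat L ρ c a b * (K⁻¹ * r ^ n * v b) :=
            Finset.sum_le_sum fun b _ => mul_le_mul_of_nonneg_left (ih b) (hP a b).le
        _ = K⁻¹ * r ^ (n + 1) * v a := by
            rw [pow_succ, show K⁻¹ * (r ^ n * r) * v a = K⁻¹ * r ^ n * (r * v a) by ring, ← hPv' a,
              Finset.mul_sum]
            exact Finset.sum_congr rfl fun b _ => by ring
  set A := ∑ b, √(c b) * v b with hA
  have hApos : 0 < A :=
    Finset.sum_pos (fun b _ => mul_pos (hs b) (hv b)) Finset.univ_nonempty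
  -- a word of length `n + 1` carries `r ^ n`, whence the factor `A / r` in both constants
  have hk' : 0 < k * A / r := by positivity
  set D := max 1 (max (k * A / r)⁻¹ (K⁻¹ * A / r)) with hD
  have hD1 : 1 ≤ D := le_max_left _ _
  have hDk : D⁻¹ ≤ k * A / r :=
    inv_le_of_inv_le₀ hk' ((le_max_left _ _).trans (le_max_right _ _))
  have hDK : K⁻¹ * A / r ≤ D := (le_max_right _ _).trans (le_max_right _ _)
  refine ⟨D, hD1, fun m hm => ?_⟩
  obtain ⟨n, rfl⟩ : ∃ n, m = n + 1 := ⟨m - 1, by omega⟩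
  rw [hσ, sum_wordWeight_succ hc]
  constructor
  · calc D⁻¹ * r ^ (n + 1) ≤ k * A / r * r ^ (n + 1) := by gcongr
      _ = ∑ b, √(c b) * (k * r ^ n * v b) := by
          rw [pow_succ, show k * A / r * (r ^ n * r) = k * r ^ n * A by field_simp, hA,
            Finset.mul_sum]
          exact Finset.sum_congr rfl fun b _ => by ring
      _ ≤ ∑ b, √(c b) * startSum L ρ c n b :=
          Finset.sum_le_sum fun b _ => mul_le_mul_of_nonneg_left (hlow n b) (hs b).le
  · calc ∑ b, √(c b) * startSum L ρ c n b ≤ ∑ b, √(c b) * (K⁻¹ * r ^ n * v b) :=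
          Finset.sum_le_sum fun b _ => mul_le_mul_of_nonneg_left (hupp n b) (hs b).le
      _ = K⁻¹ * A / r * r ^ (n + 1) := by
          rw [pow_succ, show K⁻¹ * A / r * (r ^ n * r) = K⁻¹ * r ^ n * A by field_simp, hA,
            Finset.mul_sum]
          exact Finset.sum_congr rfl fun b _ => by ring
      _ ≤ D * r ^ (n + 1) := by gcongr
end
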